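/- arXiv:1504.05822 — 9 statements merged into one kernel-verified Lean document; each statement's English description precedes it below -/
import Mathlib

section
/- Let N ≥ 1, let A and B be N×N complex matrices with B = B*, and let h(p) = e^{-ip}A + e^{ip}A* + B. Suppose λ : ℝ → ℝ and W : ℝ → ℂ^N are differentiable functions such that for all p ∈ ℝ, ‖W(p)‖ = 1 and h(p)W(p) = λ(p)W(p). Then for all p ∈ ℝ, λ'(p) = −2·Im(e^{ip}·⟨A W(p), W(p)⟩). -/
open Matrix Complex


lemma dot_deriv {N : ℕ} (v : Fin N → ℂ) (W : ℝ → EuclideanSpace ℂ (Fin N))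
    (hW : Differentiable ℝ W) (p : ℝ) :
    HasDerivAt (fun q => v ⬝ᵥ (W q).ofLp) (v ⬝ᵥ (deriv W p).ofLp) p := by
  have h := (hW p).hasDerivAt
  have hi : ∀ i, HasDerivAt (fun q => W q i) (deriv W p i) p := by
    intro i
    exact ((EuclideanSpace.proj (𝕜 := ℂ) i).restrictScalars ℝ).hasFDerivAt.comp_hasDerivAt p h
  unfold dotProduct
  exact HasDerivAt.fun_sum fun i _ => (hi i).const_mul (v i)

/-- If `λ(p)` is a differentiable eigenvalue branch of
`h(p) = e^{-ip}A + e^{ip}Aᴴ + B` with differentiable normalized eigenvector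
branch `W(p)`, then `λ'(p) = -2 Im(e^{ip}⟨A W(p), W(p)⟩)`. -/
theorem eigenvalue_branch_deriv (N : ℕ) (hN : 1 ≤ N)
    (A B : Matrix (Fin N) (Fin N) ℂ) (hB : B = Bᴴ)
    (lam : ℝ → ℝ) (W : ℝ → EuclideanSpace ℂ (Fin N))
    (hlam : Differentiable ℝ lam) (hW : Differentiable ℝ W)
    (hnorm : ∀ p : ℝ, ‖W p‖ = 1)
    (heig : ∀ p : ℝ,
      (Complex.exp (-((p : ℂ) * Complex.I)) • A
        + Complex.exp ((p : ℂ) * Complex.I) • Aᴴ + B) *ᵥ (W p)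
      = (lam p : ℂ) • W p) :
    ∀ p : ℝ, deriv lam p
      = -2 * (Complex.exp ((p : ℂ) * Complex.I)
          * @inner ℂ (EuclideanSpace ℂ (Fin N)) _
              ((WithLp.equiv 2 (Fin N → ℂ)).symm (A *ᵥ W p)) (W p)).im := by
  intro p
  set w := (W p).ofLp with hw
  set E : ℂ := Complex.exp ((p : ℂ) * Complex.I) with hE
  set F : ℂ := Complex.exp (-((p : ℂ) * Complex.I)) with hF
  set D := (deriv W p).ofLp with hD
  have hE' : HasDerivAt (fun q : ℝ => Complex.exp ((q : ℂ) * Complex.I)) (E * (1 * Complex.I)) p :=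
    ((Complex.ofRealCLM.hasDerivAt (x := p)).mul_const Complex.I).cexp
  have hF' : HasDerivAt (fun q : ℝ => Complex.exp (-((q : ℂ) * Complex.I)))
      (F * (-(1 * Complex.I))) p :=
    ((Complex.ofRealCLM.hasDerivAt (x := p)).mul_const Complex.I).neg.cexp
  have hl : HasDerivAt (fun q : ℝ => (lam q : ℂ)) ((deriv lam p : ℝ) : ℂ) p :=
    (hlam p).hasDerivAt.ofReal_comp
  have hL := ((hF'.mul (dot_deriv (star w ᵥ* A) W hW p)).add
    (hE'.mul (dot_deriv (star w ᵥ* Aᴴ) W hW p))).add (dot_deriv (star w ᵥ* B) W hW p)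
  have hR := hl.mul (dot_deriv (star w) W hW p)
  have heq : ∀ q : ℝ, Complex.exp (-((q : ℂ) * Complex.I)) * ((star w ᵥ* A) ⬝ᵥ (W q).ofLp)
      + Complex.exp ((q : ℂ) * Complex.I) * ((star w ᵥ* Aᴴ) ⬝ᵥ (W q).ofLp)
      + (star w ᵥ* B) ⬝ᵥ (W q).ofLp = (lam q : ℂ) * (star w ⬝ᵥ (W q).ofLp) := by
    intro q
    have := congrArg (fun x => star w ⬝ᵥ x) (heig q)
    simpa [add_mulVec, smul_mulVec, dotProduct_add, dotProduct_smul, dotProduct_mulVec] using this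
  have key := hL.unique (hR.congr_of_eventuallyEq (Filter.Eventually.of_forall heq))
  have hEF : star E = F := by
    rw [hE, hF, Complex.star_def, ← Complex.exp_conj]; simp
  have hFE : star F = E := by rw [← hEF, star_star]
  -- left eigenvector
  have hleft : F • (star w ᵥ* A) + E • (star w ᵥ* Aᴴ) + star w ᵥ* B = (lam p : ℂ) • star w := by
    have h1 := congrArg star (heig p)
    rw [star_mulVec] at h1
    have h2 : (F • A + E • Aᴴ + B)ᴴ = F • A + E • Aᴴ + B := by
      rw [conjTranspose_add, conjTranspose_add, conjTranspose_smul, conjTranspose_smul,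
        conjTranspose_conjTranspose, ← hB, hEF, hFE, add_comm (E • Aᴴ)]
    rw [h2] at h1
    simpa [vecMul_add, vecMul_smul] using h1
  have hleftD := congrArg (fun x => x ⬝ᵥ D) hleft
  simp only [add_dotProduct, smul_dotProduct, smul_eq_mul] at hleftD
  have hn : star w ⬝ᵥ w = 1 := by
    have := inner_self_eq_norm_sq_to_K (𝕜 := ℂ) (W p)
    rw [hnorm, EuclideanSpace.inner_eq_star_dotProduct, dotProduct_comm] at this
    simpa using this
  have hz : @inner ℂ (EuclideanSpace ℂ (Fin N)) _
      ((WithLp.equiv 2 (Fin N → ℂ)).symm (A *ᵥ w)) (W p) = (star w ᵥ* Aᴴ) ⬝ᵥ w := by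
    rw [EuclideanSpace.inner_eq_star_dotProduct, dotProduct_comm, ← star_mulVec]
    rfl
  have hzc : (star w ᵥ* A) ⬝ᵥ w = star ((star w ᵥ* Aᴴ) ⬝ᵥ w) := by
    rw [← star_mulVec, star_dotProduct, star_star, dotProduct_mulVec]
  rw [hz]
  rw [← hw, hzc, hn] at key
  set z := (star w ᵥ* Aᴴ) ⬝ᵥ w
  have fin : ((deriv lam p : ℝ) : ℂ) = Complex.I * (E * z) - Complex.I * star (E * z) := by
    rw [star_mul', hEF]
    linear_combination -key + hleftD
  have := congrArg Complex.re fin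
  simp only [Complex.ofReal_re, Complex.sub_re, Complex.I_mul_re, Complex.star_def,
    Complex.conj_im] at this
  rw [this]; ring
end

section
/- Let N ≥ 1, let A be an N×N Hermitian positive definite complex matrix, let B be an N×N complex matrix with B = B*, and let h(p) = e^{-ip}A + e^{ip}A* + B. Suppose λ : ℝ → ℝ and W : ℝ → ℂ^N are differentiable functions such that for all p ∈ ℝ, ‖W(p)‖ = 1 and h(p)W(p) = λ(p)W(p). Then for all p ∈ ℝ, λ'(p) = −2·⟨A W(p), W(p)⟩·sin p, where ⟨A W(p), W(p)⟩ is real and strictly positive; consequently λ is strictly decreasing on the interval [0, π]. -/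
open Matrix Complex
open scoped ComplexOrder


theorem toEuclideanLin_symm {N : ℕ} {A : Matrix (Fin N) (Fin N) ℂ} (hA : A.IsHermitian)
    (x y : EuclideanSpace ℂ (Fin N)) :
    inner ℂ (toEuclideanLin A x) y = inner ℂ x (toEuclideanLin A y) :=
  (Matrix.isSymmetric_toEuclideanLin_iff.2 hA) x y

/-- If `A` is Hermitian positive definite and `B = Bᴴ`, then for a
differentiable normalized eigenpair branch `(λ(p), W(p))` of
`h(p) = e^{-ip}A + e^{ip}Aᴴ + B` one has
`λ'(p) = -2⟨A W(p), W(p)⟩ sin p` with `⟨A W(p), W(p)⟩` real and strictly positive;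
consequently `λ` is strictly decreasing on `[0, π]`. -/
theorem eigenvalue_branch_posdef (N : ℕ) (hN : 1 ≤ N)
    (A B : Matrix (Fin N) (Fin N) ℂ) (hA : A.PosDef) (hB : B = Bᴴ)
    (lam : ℝ → ℝ) (W : ℝ → EuclideanSpace ℂ (Fin N))
    (hlam : Differentiable ℝ lam) (hW : Differentiable ℝ W)
    (hnorm : ∀ p : ℝ, ‖W p‖ = 1)
    (heig : ∀ p : ℝ,
      (Complex.exp (-((p : ℂ) * Complex.I)) • A
        + Complex.exp ((p : ℂ) * Complex.I) • Aᴴ + B) *ᵥ (W p)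
      = (lam p : ℂ) • W p) :
    (∀ p : ℝ,
      (@inner ℂ (EuclideanSpace ℂ (Fin N)) _
          ((WithLp.equiv 2 (Fin N → ℂ)).symm (A *ᵥ W p)) (W p)).im = 0 ∧
      0 < (@inner ℂ (EuclideanSpace ℂ (Fin N)) _
          ((WithLp.equiv 2 (Fin N → ℂ)).symm (A *ᵥ W p)) (W p)).re ∧
      deriv lam p = -2 * (@inner ℂ (EuclideanSpace ℂ (Fin N)) _
          ((WithLp.equiv 2 (Fin N → ℂ)).symm (A *ᵥ W p)) (W p)).re * Real.sin p) ∧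
    StrictAntiOn lam (Set.Icc 0 Real.pi) := by
  have hE : ∀ q : ℝ, Complex.exp (-((q : ℂ) * Complex.I)) + Complex.exp ((q : ℂ) * Complex.I)
      = 2 * ((Real.cos q : ℝ) : ℂ) := by
    intro q
    rw [Complex.ofReal_cos, Complex.two_cos, add_comm, neg_mul]
  have hpos : ∀ p : ℝ, 0 < (@inner ℂ (EuclideanSpace ℂ (Fin N)) _
      (toEuclideanLin A (W p)) (W p)) := by
    intro p
    have hne : W p ≠ 0 := by
      intro h
      have := hnorm p
      simp [h] at this
    have h1 := hA.dotProduct_mulVec_pos (x := WithLp.ofLp (W p)) (by simpa using hne)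
    rw [toEuclideanLin_symm hA.isHermitian]
    rw [EuclideanSpace.inner_eq_star_dotProduct, dotProduct_comm]
    exact h1
  have hder : ∀ p : ℝ, deriv lam p = -2 * (@inner ℂ (EuclideanSpace ℂ (Fin N)) _
      (toEuclideanLin A (W p)) (W p)).re * Real.sin p := by
    intro p
    have heig' : ∀ q, (2 * ((Real.cos q : ℝ) : ℂ)) • toEuclideanLin A (W q)
        + toEuclideanLin B (W q) = (lam q : ℂ) • W q := by
      intro q
      have h := heig q
      rw [hA.isHermitian.eq, ← add_smul, hE, add_mulVec, smul_mulVec] at h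
      apply (WithLp.equiv 2 (Fin N → ℂ)).injective
      exact h
    have key : ∀ q, ((lam q : ℂ) - lam p) * inner ℂ (W p) (W q)
        = (2 * (((Real.cos q : ℝ) : ℂ) - ((Real.cos p : ℝ) : ℂ)))
          * inner ℂ (toEuclideanLin A (W p)) (W q) := by
      intro q
      have h1 := congrArg (fun v => inner ℂ (W p) v) (heig' q)
      have h2 := congrArg (fun v => inner ℂ v (W q)) (heig' p)
      simp only [inner_add_right, inner_add_left, inner_smul_right, inner_smul_left, map_mul,
        Complex.conj_ofReal, map_ofNat] at h1 h2
      rw [← toEuclideanLin_symm hA.isHermitian, ← toEuclideanLin_symm hB.symm] at h1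
      linear_combination h2 - h1
    have hWp := (hW p).hasDerivAt
    have hd1 : HasDerivAt (fun q : ℝ => (lam q : ℂ) - lam p) ((deriv lam p : ℝ) : ℂ) p :=
      ((hlam p).hasDerivAt.ofReal_comp).sub_const _
    have hd2 : HasDerivAt (fun q : ℝ => 2 * (((Real.cos q : ℝ) : ℂ) - ((Real.cos p : ℝ) : ℂ)))
        (2 * ((-Real.sin p : ℝ) : ℂ)) p :=
      (((Real.hasDerivAt_cos p).ofReal_comp).sub_const _).const_mul _
    have hi : ∀ v : EuclideanSpace ℂ (Fin N),
        HasDerivAt (fun q : ℝ => inner ℂ v (W q)) (inner ℂ v (deriv W p)) p := by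
      intro v
      simpa using (hasDerivAt_const p v).inner ℂ hWp
    have e1 := hd1.mul (hi (W p))
    have e2 := hd2.mul (hi (toEuclideanLin A (W p)))
    have hu := e1.unique (e2.congr_of_eventuallyEq (Filter.Eventually.of_forall key))
    simp only [sub_self, mul_zero, zero_mul, add_zero, inner_self_eq_norm_sq_to_K, hnorm] at hu
    have := congrArg Complex.re hu
    rw [← Complex.ofReal_ofNat, ← Complex.ofReal_mul, Complex.re_ofReal_mul] at this
    simp [Complex.sin_ofReal_re] at this
    linarith
  refine ⟨fun p => ⟨(Complex.pos_iff.1 (hpos p)).2.symm, (Complex.pos_iff.1 (hpos p)).1, hder p⟩, ?_⟩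
  apply strictAntiOn_of_deriv_neg (convex_Icc _ _) hlam.continuous.continuousOn
  intro x hx
  rw [interior_Icc] at hx
  have h1 := Real.sin_pos_of_mem_Ioo hx
  have h2 := (Complex.pos_iff.1 (hpos x)).1
  rw [hder]
  nlinarith [mul_pos h2 h1]
end

section
/- Let N ≥ 1, let A be an N×N Hermitian invertible complex matrix and B an N×N complex matrix with B = B*, and let h(p) = e^{-ip}A + e^{ip}A* + B = (2 cos p)A + B. Then there is no real number c such that c is an eigenvalue of h(p) for every p ∈ [−π, π]; equivalently, there is no c ∈ ℝ with det(h(p) − c·I) = 0 for all p ∈ [−π, π]. -/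
open Matrix Complex

/-- If `A` is Hermitian and invertible and `B = Bᴴ`, then there is
no real `c` which is an eigenvalue of `h(p) = e^{-ip}A + e^{ip}Aᴴ + B` for every
`p ∈ [-π, π]`. -/
theorem no_flat_band_of_invertible (N : ℕ) (hN : 1 ≤ N)
    (A B : Matrix (Fin N) (Fin N) ℂ)
    (hA : A.IsHermitian) (hAinv : IsUnit A.det) (hB : B = Bᴴ) :
    ¬ ∃ c : ℝ, ∀ p ∈ Set.Icc (-Real.pi) Real.pi,
      ((Complex.exp (-((p : ℂ) * Complex.I)) • A
          + Complex.exp ((p : ℂ) * Complex.I) • Aᴴ + B)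
        - (c : ℂ) • (1 : Matrix (Fin N) (Fin N) ℂ)).det = 0 := by
  rintro ⟨c, hc⟩
  set D : Matrix (Fin N) (Fin N) ℂ := B - (c : ℂ) • (1 : Matrix (Fin N) (Fin N) ℂ) with hD
  set P : Polynomial ℂ :=
    Matrix.det ((Polynomial.X : Polynomial ℂ) • A.map Polynomial.C + D.map Polynomial.C) with hP
  have hcoeff : P.coeff N = A.det := by
    have := Polynomial.coeff_det_X_add_C_card A D
    simpa using this
  have heval : ∀ z : ℂ, P.eval z = (z • A + D).det := by
    intro z
    rw [hP, ← Polynomial.coe_evalRingHom, RingHom.map_det]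
    congr 1
    ext i j
    simp
    ring
  have hP0 : P = 0 := by
    apply Polynomial.eq_zero_of_infinite_isRoot
    have hinf : (Set.Icc (0 : ℝ) Real.pi).Infinite := Set.Icc_infinite Real.pi_pos
    have hinj : Set.InjOn (fun p : ℝ => ((2 * Real.cos p : ℝ) : ℂ)) (Set.Icc (0 : ℝ) Real.pi) := by
      intro x hx y hy hxy
      have h1 : 2 * Real.cos x = 2 * Real.cos y := Complex.ofReal_injective hxy
      exact Real.injOn_cos hx hy (by linarith)
    refine (hinf.image hinj).mono ?_
    rintro _ ⟨p, hp, rfl⟩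
    have h := hc p ⟨by linarith [hp.1, Real.pi_pos], hp.2⟩
    change P.eval _ = 0
    rw [heval, ← h]
    congr 1
    rw [hA.eq, ← add_smul, hD, add_sub_assoc]
    congr 2
    push_cast
    rw [Complex.two_cos]
    ring_nf
  rw [hP0] at hcoeff
  exact hAinv.ne_zero (by simpa using hcoeff.symm)
end

section
/- Let N ≥ 1, let A and B be N×N Hermitian complex matrices such that ⟨Aw, w⟩ ≠ 0 for every nonzero w ∈ ℂ^N which is an eigenvector of B (i.e. Bw = μw for some μ ∈ ℝ). Let h(p) = e^{-ip}A + e^{ip}A* + B, and suppose λ : ℝ → ℝ and W : ℝ → ℂ^N are differentiable functions such that for all p ∈ ℝ, ‖W(p)‖ = 1 and h(p)W(p) = λ(p)W(p). Then λ'(π/2) ≠ 0. -/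
open Matrix Complex

/-- Let `A, B` be Hermitian with `⟨Aw, w⟩ ≠ 0` for every nonzero
eigenvector `w` of `B`. Then a differentiable normalized eigenpair branch
`(λ(p), W(p))` of `h(p) = e^{-ip}A + e^{ip}Aᴴ + B` satisfies `λ'(π/2) ≠ 0`. -/
theorem deriv_ne_zero_at_pi_div_two (N : ℕ) (hN : 1 ≤ N)
    (A B : Matrix (Fin N) (Fin N) ℂ)
    (hA : A.IsHermitian) (hB : B.IsHermitian)
    (hAB : ∀ w : EuclideanSpace ℂ (Fin N), w ≠ 0 →
      (∃ μ : ℝ, B *ᵥ w = (μ : ℂ) • w) →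
      @inner ℂ (EuclideanSpace ℂ (Fin N)) _
        ((WithLp.equiv 2 (Fin N → ℂ)).symm (A *ᵥ w)) w ≠ 0)
    (lam : ℝ → ℝ) (W : ℝ → EuclideanSpace ℂ (Fin N))
    (hlam : Differentiable ℝ lam) (hW : Differentiable ℝ W)
    (hnorm : ∀ p : ℝ, ‖W p‖ = 1)
    (heig : ∀ p : ℝ,
      (Complex.exp (-((p : ℂ) * Complex.I)) • A
        + Complex.exp ((p : ℂ) * Complex.I) • Aᴴ + B) *ᵥ (W p)
      = (lam p : ℂ) • W p) :
    deriv lam (Real.pi / 2) ≠ 0 := by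
  set w0 := W (Real.pi / 2) with hw0
  have hh : ∀ p : ℝ, (2 * Complex.cos p) • (A *ᵥ (W p).ofLp) + B *ᵥ (W p).ofLp
      = (lam p : ℂ) • (W p).ofLp := by
    intro p
    have h := heig p
    rw [hA.eq, ← add_smul, Matrix.add_mulVec, Matrix.smul_mulVec] at h
    have e : Complex.exp (-((p : ℂ) * Complex.I)) + Complex.exp ((p : ℂ) * Complex.I)
        = 2 * Complex.cos p := by
      rw [Complex.cos]; ring_nf
    rw [e] at h
    exact h
  have hc0 : Complex.cos ((Real.pi / 2 : ℝ) : ℂ) = 0 := by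
    rw [← Complex.ofReal_cos, Real.cos_pi_div_two]; simp
  have hB0 : B *ᵥ w0.ofLp = (lam (Real.pi / 2) : ℂ) • w0.ofLp := by
    have h := hh (Real.pi / 2)
    rw [hc0] at h
    simpa using h
  have hsB : star w0.ofLp ᵥ* B = (lam (Real.pi / 2) : ℂ) • star w0.ofLp := by
    have h := congrArg star hB0
    rw [Matrix.star_mulVec, hB.eq] at h
    simpa using h
  have key : ∀ p : ℝ, (2 * Complex.cos p) * (star w0.ofLp ⬝ᵥ (A *ᵥ (W p).ofLp))
      = ((lam p : ℂ) - lam (Real.pi / 2)) * (star w0.ofLp ⬝ᵥ (W p).ofLp) := by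
    intro p
    have h := congrArg (fun v => star w0.ofLp ⬝ᵥ v) (hh p)
    simp only [dotProduct_add, dotProduct_smul, smul_eq_mul] at h
    rw [dotProduct_mulVec _ B, hsB, smul_dotProduct, smul_eq_mul] at h
    linear_combination h
  have hWi : ∀ i, Differentiable ℝ (fun p => (W p).ofLp i) := by
    intro i
    exact (((EuclideanSpace.proj i : EuclideanSpace ℂ (Fin N) →L[ℂ] ℂ).restrictScalars ℝ).differentiable).comp hW
  have ha : Differentiable ℝ (fun p => star w0.ofLp ⬝ᵥ (A *ᵥ (W p).ofLp)) := by
    unfold Matrix.mulVec dotProduct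
    fun_prop
  have hg : Differentiable ℝ (fun p => star w0.ofLp ⬝ᵥ (W p).ofLp) := by
    unfold dotProduct
    fun_prop
  intro hd
  have hl : HasDerivAt (fun p : ℝ => (lam p : ℂ)) 0 (Real.pi / 2) := by
    have := (hlam (Real.pi / 2)).hasDerivAt.ofReal_comp
    rw [hd] at this
    simpa using this
  have hcos : HasDerivAt (fun p : ℝ => 2 * Complex.cos (p : ℂ)) (-2) (Real.pi / 2) := by
    have := ((Real.hasDerivAt_cos (Real.pi / 2)).ofReal_comp).const_mul (2 : ℂ)
    simpa using this
  have h1 := hcos.mul (ha (Real.pi / 2)).hasDerivAt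
  have h2 := (hl.sub_const (lam (Real.pi / 2) : ℂ)).mul (hg (Real.pi / 2)).hasDerivAt
  have h3 := h1.unique (h2.congr_of_eventuallyEq (Filter.Eventually.of_forall key))
  rw [hc0] at h3
  have h4 : star w0.ofLp ⬝ᵥ (A *ᵥ w0.ofLp) = 0 := by
    simpa using h3
  have hne : w0 ≠ 0 := by
    intro h
    have := hnorm (Real.pi / 2)
    rw [← hw0, h] at this
    simp at this
  apply hAB w0 hne ⟨_, hB0⟩
  have h5 := congrArg star h4
  rw [← Matrix.star_dotProduct_star, star_star] at h5
  rw [EuclideanSpace.inner_eq_star_dotProduct, dotProduct_comm]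
  simpa using h5
end

section
/- Let N ≥ 1, let A be any N×N complex matrix and B an N×N complex matrix with B = B*. Assume that ⟨(A + A*)w, w⟩ ≠ 0 for every nonzero w ∈ ℂ^N which is an eigenvector of the Hermitian matrix i(A − A*) + B. Let h(p) = e^{-ip}A + e^{ip}A* + B, and suppose λ : ℝ → ℝ and W : ℝ → ℂ^N are differentiable functions such that for all p ∈ ℝ, ‖W(p)‖ = 1 and h(p)W(p) = λ(p)W(p). Then λ'(−π/2) = ⟨(A + A*)W(−π/2), W(−π/2)⟩ ≠ 0. -/
open Matrix Complex

theorem aux_deriv {N : ℕ} (u : Fin N → ℂ) (M : Matrix (Fin N) (Fin N) ℂ)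
    (W : ℝ → EuclideanSpace ℂ (Fin N)) (hW : Differentiable ℝ W) (p : ℝ) :
    HasDerivAt (fun q : ℝ => u ⬝ᵥ (M *ᵥ (W q).ofLp)) (u ⬝ᵥ (M *ᵥ (deriv W p).ofLp)) p := by
  have hc : ∀ i, HasDerivAt (fun q : ℝ => (W q).ofLp i) ((deriv W p).ofLp i) p := by
    intro i
    have h := ((EuclideanSpace.proj i : EuclideanSpace ℂ (Fin N) →L[ℂ] ℂ).restrictScalars
      ℝ).hasFDerivAt.comp_hasDerivAt p (hW p).hasDerivAt
    exact h
  simp only [dotProduct_mulVec]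
  simp only [dotProduct]
  exact HasDerivAt.fun_sum fun i _ => (hc i).const_mul _

/-- Let `A` be any matrix and `B = Bᴴ` with
`⟨(A + Aᴴ)w, w⟩ ≠ 0` for every nonzero eigenvector `w` of `i(A - Aᴴ) + B`.
Then a differentiable normalized eigenpair branch `(λ(p), W(p))` of
`h(p) = e^{-ip}A + e^{ip}Aᴴ + B` satisfies
`λ'(-π/2) = ⟨(A + Aᴴ)W(-π/2), W(-π/2)⟩ ≠ 0`. -/
theorem deriv_at_neg_pi_div_two (N : ℕ) (hN : 1 ≤ N)
    (A B : Matrix (Fin N) (Fin N) ℂ) (hB : B = Bᴴ)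
    (hAB : ∀ w : EuclideanSpace ℂ (Fin N), w ≠ 0 →
      (∃ μ : ℝ, (Complex.I • (A - Aᴴ) + B) *ᵥ w = (μ : ℂ) • w) →
      @inner ℂ (EuclideanSpace ℂ (Fin N)) _
        ((WithLp.equiv 2 (Fin N → ℂ)).symm ((A + Aᴴ) *ᵥ w)) w ≠ 0)
    (lam : ℝ → ℝ) (W : ℝ → EuclideanSpace ℂ (Fin N))
    (hlam : Differentiable ℝ lam) (hW : Differentiable ℝ W)
    (hnorm : ∀ p : ℝ, ‖W p‖ = 1)
    (heig : ∀ p : ℝ,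
      (Complex.exp (-((p : ℂ) * Complex.I)) • A
        + Complex.exp ((p : ℂ) * Complex.I) • Aᴴ + B) *ᵥ (W p)
      = (lam p : ℂ) • W p) :
    ((deriv lam (-(Real.pi / 2)) : ℝ) : ℂ)
      = @inner ℂ (EuclideanSpace ℂ (Fin N)) _
          ((WithLp.equiv 2 (Fin N → ℂ)).symm ((A + Aᴴ) *ᵥ W (-(Real.pi / 2))))
          (W (-(Real.pi / 2))) ∧
    deriv lam (-(Real.pi / 2)) ≠ 0 := by
  set p₀ : ℝ := -(Real.pi / 2) with hp₀
  have e1 : Complex.exp ((p₀ : ℂ) * Complex.I) = -Complex.I := by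
    have : ((p₀ : ℂ) * Complex.I) = -((Real.pi : ℂ) / 2 * Complex.I) := by
      rw [hp₀]; push_cast; ring
    rw [this, Complex.exp_neg, Complex.exp_pi_div_two_mul_I, Complex.inv_I]
  have e2 : Complex.exp (-((p₀ : ℂ) * Complex.I)) = Complex.I := by
    rw [Complex.exp_neg, e1, inv_neg, Complex.inv_I, neg_neg]
  have hH : (Complex.I • (A - Aᴴ) + B) *ᵥ (W p₀).ofLp = (lam p₀ : ℂ) • (W p₀).ofLp := by
    have h := heig p₀
    rw [e1, e2] at h
    have h2 : Complex.I • (A - Aᴴ) + B = Complex.I • A + (-Complex.I) • Aᴴ + B := by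
      rw [smul_sub, neg_smul, sub_eq_add_neg]
    rw [h2]; exact h
  have hne : W p₀ ≠ 0 := by
    intro h; have := hnorm p₀; rw [h, norm_zero] at this; norm_num at this
  have hnz := hAB (W p₀) hne ⟨lam p₀, hH⟩
  have hvv : star (W p₀).ofLp ⬝ᵥ (W p₀).ofLp = 1 := by
    have h := inner_self_eq_norm_sq_to_K (𝕜 := ℂ) (W p₀)
    rw [EuclideanSpace.inner_eq_star_dotProduct, hnorm, dotProduct_comm] at h
    simpa using h
  have hin : @inner ℂ (EuclideanSpace ℂ (Fin N)) _
          ((WithLp.equiv 2 (Fin N → ℂ)).symm ((A + Aᴴ) *ᵥ W p₀)) (W p₀)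
      = star (W p₀).ofLp ⬝ᵥ ((A + Aᴴ) *ᵥ (W p₀).ofLp) := by
    rw [EuclideanSpace.inner_eq_star_dotProduct, dotProduct_comm, dotProduct_mulVec]
    simp [star_mulVec, add_comm]
  -- the Hermitian property moved onto the left vector
  have hherm : (Complex.I • (A - Aᴴ) + B)ᴴ = Complex.I • (A - Aᴴ) + B := by
    rw [conjTranspose_add, ← hB, conjTranspose_smul, conjTranspose_sub, conjTranspose_conjTranspose]
    simp only [Complex.star_def, Complex.conj_I, neg_smul, ← smul_neg, neg_sub]
  have hleft : star (W p₀).ofLp ᵥ* (Complex.I • (A - Aᴴ) + B)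
      = (lam p₀ : ℂ) • star (W p₀).ofLp := by
    have h := congrArg star hH
    rw [star_mulVec, hherm, star_smul] at h
    simpa using h
  have key : ((deriv lam p₀ : ℝ) : ℂ)
      = star (W p₀).ofLp ⬝ᵥ ((A + Aᴴ) *ᵥ (W p₀).ofLp) := by
    have hp : HasDerivAt (fun q : ℝ => (q : ℂ) * Complex.I) Complex.I p₀ := by
      simpa using (Complex.ofRealCLM.hasDerivAt (x := p₀)).mul_const Complex.I
    have hA := aux_deriv (star (W p₀).ofLp) A W hW p₀
    have hA' := aux_deriv (star (W p₀).ofLp) Aᴴ W hW p₀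
    have hB' := aux_deriv (star (W p₀).ofLp) B W hW p₀
    have h1 := aux_deriv (star (W p₀).ofLp) 1 W hW p₀
    have hL := ((hp.fun_neg.cexp.fun_mul hA).fun_add (hp.cexp.fun_mul hA')).fun_add hB'
    have hR := ((hlam p₀).hasDerivAt.ofReal_comp).fun_mul h1
    have hfun : (fun q : ℝ => Complex.exp (-((q : ℂ) * Complex.I)) *
          (star (W p₀).ofLp ⬝ᵥ (A *ᵥ (W q).ofLp))
        + Complex.exp ((q : ℂ) * Complex.I) * (star (W p₀).ofLp ⬝ᵥ (Aᴴ *ᵥ (W q).ofLp))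
        + star (W p₀).ofLp ⬝ᵥ (B *ᵥ (W q).ofLp))
        = fun q : ℝ => (lam q : ℂ) * (star (W p₀).ofLp ⬝ᵥ
          ((1 : Matrix (Fin N) (Fin N) ℂ) *ᵥ (W q).ofLp)) := by
      funext q
      have h := congrArg (fun x => star (W p₀).ofLp ⬝ᵥ x) (heig q)
      simpa [add_mulVec, smul_mulVec, dotProduct_add, dotProduct_smul] using h
    rw [hfun] at hL
    have hu := hL.unique hR
    rw [e1, e2] at hu
    have hd : star (W p₀).ofLp ⬝ᵥ ((Complex.I • (A - Aᴴ) + B) *ᵥ (deriv W p₀).ofLp)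
        = (lam p₀ : ℂ) * (star (W p₀).ofLp ⬝ᵥ (deriv W p₀).ofLp) := by
      rw [dotProduct_mulVec, hleft, smul_dotProduct, smul_eq_mul]
    simp only [add_mulVec, sub_mulVec, smul_mulVec, dotProduct_add, dotProduct_sub,
      dotProduct_smul, smul_eq_mul] at hd
    simp only [one_mulVec, hvv, mul_one] at hu
    rw [add_mulVec, dotProduct_add]
    linear_combination -hu + hd - (star (W p₀).ofLp ⬝ᵥ (A *ᵥ (W p₀).ofLp)
      + star (W p₀).ofLp ⬝ᵥ (Aᴴ *ᵥ (W p₀).ofLp)) * Complex.I_mul_I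
  refine ⟨key.trans hin.symm, ?_⟩
  intro h0
  apply hnz
  rw [hin, ← key, h0, Complex.ofReal_zero]
end

section
/- Let N ≥ 3, let a₁, …, a_N > 0 and b₁, …, b_N ∈ ℝ, and let h(p) be the periodic N×N Hermitian matrix with corner phases. Then: (i) for every p ∈ ℝ and every eigenvalue λ of h(p), the eigenspace ker(h(p) − λI) has dimension at most 2; (ii) if p ∈ (0, π), then every eigenvalue of h(p) is simple, i.e. dim ker(h(p) − λI) = 1 for every eigenvalue λ of h(p). -/
open Matrix Complex

/-- The periodic `N×N` Hermitian matrix with corner phases: real symmetric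
tridiagonal part with diagonal `b 0, …, b (N-1)`, off-diagonal entries
`a 0, …, a (N-2)`, and corners `(h p)₁,N = a_N e^{ip}`, `(h p)_{N,1} = a_N e^{-ip}`
(with `a_N = a (N-1)` in 0-based notation). -/
noncomputable def hper (N : ℕ) (a b : ℕ → ℝ) (p : ℝ) : Matrix (Fin N) (Fin N) ℂ :=
  Matrix.of fun i j =>
    if (i : ℕ) = (j : ℕ) then (b i : ℂ)
    else if (i : ℕ) + 1 = (j : ℕ) then (a i : ℂ)
    else if (j : ℕ) + 1 = (i : ℕ) then (a j : ℂ)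
    else if (i : ℕ) = 0 ∧ (j : ℕ) + 1 = N then
      (a (N - 1) : ℂ) * Complex.exp ((p : ℂ) * Complex.I)
    else if (j : ℕ) = 0 ∧ (i : ℕ) + 1 = N then
      (a (N - 1) : ℂ) * Complex.exp (-((p : ℂ) * Complex.I))
    else 0

theorem hper_aux_zero (N : ℕ) (hN : 3 ≤ N) (a b : ℕ → ℝ) (ha : ∀ k < N, 0 < a k)
    (p : ℝ) (μ : ℂ) (v : Fin N → ℂ) (hv : (hper N a b p) *ᵥ v = μ • v)
    (h0 : v ⟨0, by omega⟩ = 0) (h1 : v ⟨N - 1, by omega⟩ = 0) : v = 0 := by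
  have key : ∀ k : ℕ, ∀ hk : k < N, v ⟨k, hk⟩ = 0 := by
    intro k
    induction k using Nat.strong_induction_on with
    | _ k ih =>
      intro hk
      rcases Nat.eq_zero_or_pos k with rfl | hpos
      · exact h0
      obtain ⟨m, rfl⟩ : ∃ m, k = m + 1 := ⟨k - 1, by omega⟩
      have hm : m < N := by omega
      have hrow := congrFun hv ⟨m, hm⟩
      have hvm := ih m (by omega) hm
      simp only [Matrix.mulVec, dotProduct, Pi.smul_apply, hvm, smul_zero] at hrow
      rw [Finset.sum_eq_single ⟨m + 1, hk⟩] at hrow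
      · have : (a m : ℂ) ≠ 0 := by exact_mod_cast (ha m hm).ne'
        simp [hper] at hrow
        rcases hrow with h | h
        · exact absurd h (ha m hm).ne'
        · exact h
      · rintro ⟨j, hj⟩ - hne
        have hne' : j ≠ m + 1 := fun h => hne (by simp [h])
        by_cases hjm : j < m + 1
        · rw [ih j hjm hj, mul_zero]
        · by_cases hjl : j = N - 1
          · subst hjl
            rw [h1, mul_zero]
          · have : hper N a b p ⟨m, hm⟩ ⟨j, hj⟩ = 0 := by
              simp only [hper, Matrix.of_apply]
              rw [if_neg (by omega), if_neg (by omega), if_neg (by omega), if_neg (by omega),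
                if_neg (by omega)]
            rw [this, zero_mul]
      · simp
  ext ⟨k, hk⟩
  exact key k hk

theorem hper_aux_wr (N : ℕ) (hN : 3 ≤ N) (a b : ℕ → ℝ) (ha : ∀ k < N, 0 < a k)
    (p : ℝ) (hp : p ∈ Set.Ioo (0 : ℝ) Real.pi) (μ : ℂ) (u v : Fin N → ℂ)
    (hu : (hper N a b p) *ᵥ u = μ • u) (hv : (hper N a b p) *ᵥ v = μ • v) :
    u ⟨0, by omega⟩ * v ⟨N - 1, by omega⟩ = v ⟨0, by omega⟩ * u ⟨N - 1, by omega⟩ := by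
  set c : ℂ := (a (N - 1) : ℂ) * Complex.exp ((p : ℂ) * Complex.I)
    - (a (N - 1) : ℂ) * Complex.exp (-((p : ℂ) * Complex.I)) with hc
  have hc0 : c ≠ 0 := by
    have h1 : c = (a (N - 1) : ℂ) * (2 * (Real.sin p : ℂ) * Complex.I) := by
      rw [hc, ← neg_mul, Complex.exp_mul_I, Complex.exp_mul_I, Complex.cos_neg, Complex.sin_neg]
      push_cast
      ring
    rw [h1]
    have h2 := (Real.sin_pos_of_mem_Ioo hp).ne'
    have h3 := (ha (N - 1) (by omega)).ne'
    refine mul_ne_zero (by exact_mod_cast h3)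
      (mul_ne_zero (mul_ne_zero two_ne_zero (by exact_mod_cast h2)) Complex.I_ne_zero)
  have hM : hper N a b p - (hper N a b p)ᵀ =
      Matrix.single (⟨0, by omega⟩ : Fin N) (⟨N - 1, by omega⟩ : Fin N) c
      - Matrix.single (⟨N - 1, by omega⟩ : Fin N) (⟨0, by omega⟩ : Fin N) c := by
    ext ⟨i, hi⟩ ⟨j, hj⟩
    simp only [hper, Matrix.sub_apply, Matrix.transpose_apply, Matrix.of_apply,
      Matrix.single_apply, Fin.mk.injEq]
    by_cases h1 : i = j
    · subst h1
      rw [if_neg (c := 0 = i ∧ N - 1 = i) (by omega), if_neg (c := N - 1 = i ∧ 0 = i) (by omega)]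
      simp
    have h1' : ¬ j = i := fun h => h1 h.symm
    by_cases h2 : i + 1 = j
    · have : ¬ (j + 1 = i) := by omega
      rw [if_neg (c := 0 = i ∧ N - 1 = j) (by omega), if_neg (c := N - 1 = i ∧ 0 = j) (by omega)]
      simp [h1, h1', h2, this]
    by_cases h3 : j + 1 = i
    · rw [if_neg (c := 0 = i ∧ N - 1 = j) (by omega), if_neg (c := N - 1 = i ∧ 0 = j) (by omega)]
      simp [h1, h1', h2, h3]
    simp only [h1, h1', h2, h3, if_false]
    by_cases h4 : i = 0 ∧ j + 1 = N
    · rw [if_pos h4, if_neg (by omega), if_pos h4, if_pos (by omega), if_neg (by omega), hc, sub_zero]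
    by_cases h5 : j = 0 ∧ i + 1 = N
    · rw [if_neg h4, if_pos h5, if_pos h5, if_neg (by omega), if_pos (by omega), hc]
      ring
    rw [if_neg h4, if_neg h5, if_neg h5, if_neg h4, if_neg (by omega), if_neg (by omega)]
  have e1 : u ⬝ᵥ ((hper N a b p - (hper N a b p)ᵀ) *ᵥ v) = 0 := by
    rw [Matrix.sub_mulVec, dotProduct_sub, hv, Matrix.dotProduct_mulVec u, Matrix.vecMul_transpose,
      hu, dotProduct_smul, smul_dotProduct, sub_self]
  rw [hM, Matrix.sub_mulVec, dotProduct_sub] at e1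
  simp only [Matrix.single_mulVec] at e1
  have e2 : c * (u ⟨0, by omega⟩ * v ⟨N - 1, by omega⟩ - v ⟨0, by omega⟩ * u ⟨N - 1, by omega⟩) = 0 := by
    simp [dotProduct, Function.update_apply] at e1
    linear_combination e1
  exact sub_eq_zero.mp ((mul_eq_zero.mp e2).resolve_left hc0)

theorem hper_aux_ker (N : ℕ) (a b : ℕ → ℝ) (p : ℝ) (μ : ℂ) (v : Fin N → ℂ) :
    v ∈ LinearMap.ker (hper N a b p - μ • (1 : Matrix (Fin N) (Fin N) ℂ)).mulVecLin ↔
    (hper N a b p) *ᵥ v = μ • v := by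
  rw [LinearMap.mem_ker, Matrix.mulVecLin_apply, Matrix.sub_mulVec, Matrix.smul_mulVec,
    Matrix.one_mulVec, sub_eq_zero]

/-- (i) Every eigenspace of `h(p)` has dimension at most `2`;
(ii) for `p ∈ (0, π)` every eigenvalue of `h(p)` is simple. -/
theorem hper_eigenspaces (N : ℕ) (hN : 3 ≤ N) (a b : ℕ → ℝ)
    (ha : ∀ k < N, 0 < a k) :
    (∀ (p : ℝ) (μ : ℂ),
      (∃ v : Fin N → ℂ, v ≠ 0 ∧ (hper N a b p) *ᵥ v = μ • v) →
      Module.finrank ℂ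
        (LinearMap.ker (hper N a b p - μ • (1 : Matrix (Fin N) (Fin N) ℂ)).mulVecLin)
        ≤ 2) ∧
    (∀ p ∈ Set.Ioo (0 : ℝ) Real.pi, ∀ μ : ℂ,
      (∃ v : Fin N → ℂ, v ≠ 0 ∧ (hper N a b p) *ᵥ v = μ • v) →
      Module.finrank ℂ
        (LinearMap.ker (hper N a b p - μ • (1 : Matrix (Fin N) (Fin N) ℂ)).mulVecLin)
        = 1) := by
  constructor
  · intro p μ _
    set K := LinearMap.ker (hper N a b p - μ • (1 : Matrix (Fin N) (Fin N) ℂ)).mulVecLin with hK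
    let f : K →ₗ[ℂ] (ℂ × ℂ) :=
      ((LinearMap.proj (⟨0, by omega⟩ : Fin N)).prod
        (LinearMap.proj (⟨N - 1, by omega⟩ : Fin N))).comp K.subtype
    have hf : Function.Injective f := by
      rw [← LinearMap.ker_eq_bot, LinearMap.ker_eq_bot']
      intro v hv
      have h := Prod.ext_iff.mp hv
      exact Subtype.ext (hper_aux_zero N hN a b ha p μ v.1
        ((hper_aux_ker N a b p μ v.1).mp v.2) h.1 h.2)
    have := LinearMap.finrank_le_finrank_of_injective hf
    simpa using this
  · rintro p hp μ ⟨v, hv0, hv⟩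
    rw [finrank_eq_one_iff']
    refine ⟨⟨v, (hper_aux_ker N a b p μ v).mpr hv⟩, fun h => hv0 (congrArg Subtype.val h), ?_⟩
    rintro ⟨u, hu⟩
    rw [hper_aux_ker] at hu
    have hw := hper_aux_wr N hN a b ha p hp μ u v hu hv
    have hcomb : ∀ c : ℂ, (hper N a b p) *ᵥ (c • v - u) = μ • (c • v - u) := by
      intro c
      rw [Matrix.mulVec_sub, Matrix.mulVec_smul, hu, hv, smul_sub, smul_comm]
    by_cases h0 : v ⟨0, by omega⟩ = 0
    · have h1 : v ⟨N - 1, by omega⟩ ≠ 0 := fun h1 =>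
        hv0 (hper_aux_zero N hN a b ha p μ v hv h0 h1)
      refine ⟨u ⟨N - 1, by omega⟩ / v ⟨N - 1, by omega⟩, Subtype.ext (sub_eq_zero.mp
        (hper_aux_zero N hN a b ha p μ _ (hcomb _) ?_ ?_))⟩
      · simp only [Submodule.coe_smul, Pi.sub_apply, Pi.smul_apply, smul_eq_mul]
        field_simp
        linear_combination -hw
      · simp only [Submodule.coe_smul, Pi.sub_apply, Pi.smul_apply, smul_eq_mul]
        field_simp
        ring
    · refine ⟨u ⟨0, by omega⟩ / v ⟨0, by omega⟩, Subtype.ext (sub_eq_zero.mp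
        (hper_aux_zero N hN a b ha p μ _ (hcomb _) ?_ ?_))⟩
      · simp only [Submodule.coe_smul, Pi.sub_apply, Pi.smul_apply, smul_eq_mul]
        field_simp
        ring
      · simp only [Submodule.coe_smul, Pi.sub_apply, Pi.smul_apply, smul_eq_mul]
        field_simp
        linear_combination hw
end

section
/- Let N ≥ 3, let a₁, …, a_N, a_{N+1} > 0 and b₁, …, b_N ∈ ℝ, and let h(p) be the N×N Hermitian matrix which agrees with the real symmetric tridiagonal matrix B except for the corner entries h(p)₁,N = a_N e^{ip} + a_{N+1} e^{−ip} and h(p)_{N,1} = a_N e^{−ip} + a_{N+1} e^{ip}. Then: (i) every eigenvalue of h(π/2) is simple; (ii) for every p ∈ ℝ and every eigenvalue λ of h(p), dim ker(h(p) − λI) ≤ 2; (iii) if moreover a_N ≠ a_{N+1}, then for every p ∈ (0, π) every eigenvalue of h(p) is simple. -/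
open Matrix Complex

/-- The `N×N` Hermitian matrix with real symmetric tridiagonal part (diagonal
`b 0, …, b (N-1)`, off-diagonal `a 0, …, a (N-2)`) and corner entries
`(h p)₁,N = a_N e^{ip} + a_{N+1} e^{-ip}`, `(h p)_{N,1} = a_N e^{-ip} + a_{N+1} e^{ip}`
(with `a_N = a (N-1)`, `a_{N+1} = a N` in 0-based notation). -/
noncomputable def hcor (N : ℕ) (a b : ℕ → ℝ) (p : ℝ) : Matrix (Fin N) (Fin N) ℂ :=
  Matrix.of fun i j =>
    if (i : ℕ) = (j : ℕ) then (b i : ℂ)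
    else if (i : ℕ) + 1 = (j : ℕ) then (a i : ℂ)
    else if (j : ℕ) + 1 = (i : ℕ) then (a j : ℂ)
    else if (i : ℕ) = 0 ∧ (j : ℕ) + 1 = N then
      (a (N - 1) : ℂ) * Complex.exp ((p : ℂ) * Complex.I)
        + (a N : ℂ) * Complex.exp (-((p : ℂ) * Complex.I))
    else if (j : ℕ) = 0 ∧ (i : ℕ) + 1 = N then
      (a (N - 1) : ℂ) * Complex.exp (-((p : ℂ) * Complex.I))
        + (a N : ℂ) * Complex.exp ((p : ℂ) * Complex.I)
    else 0


theorem hcor_row_zero (N : ℕ) (hN : 3 ≤ N) (a b : ℕ → ℝ) (p : ℝ) (v : Fin N → ℂ) :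
    (hcor N a b p *ᵥ v) ⟨0, by omega⟩ = (b 0 : ℂ) * v ⟨0, by omega⟩ + (a 0 : ℂ) * v ⟨1, by omega⟩
      + ((a (N - 1) : ℂ) * Complex.exp ((p : ℂ) * Complex.I)
        + (a N : ℂ) * Complex.exp (-((p : ℂ) * Complex.I))) * v ⟨N - 1, by omega⟩ := by
  have key : ∀ j : Fin N, hcor N a b p ⟨0, by omega⟩ j =
      (if j = ⟨0, by omega⟩ then (b 0 : ℂ) else 0) + (if j = ⟨1, by omega⟩ then (a 0 : ℂ) else 0)
      + (if j = ⟨N - 1, by omega⟩ then ((a (N - 1) : ℂ) * Complex.exp ((p : ℂ) * Complex.I)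
        + (a N : ℂ) * Complex.exp (-((p : ℂ) * Complex.I))) else 0) := by
    intro j
    simp only [hcor, Matrix.of_apply, Fin.ext_iff]
    split_ifs <;> first | omega | (simp; done) | grind
  simp only [Matrix.mulVec, dotProduct, key, add_mul, Finset.sum_add_distrib, ite_mul, zero_mul,
    Finset.sum_ite_eq', Finset.sum_ite_eq, Finset.mem_univ, if_true]

theorem hcor_row_mid (N : ℕ) (a b : ℕ → ℝ) (p : ℝ) (v : Fin N → ℂ)
    (k : ℕ) (hk : k + 2 < N) :
    (hcor N a b p *ᵥ v) ⟨k + 1, by omega⟩ = (a k : ℂ) * v ⟨k, by omega⟩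
      + (b (k + 1) : ℂ) * v ⟨k + 1, by omega⟩ + (a (k + 1) : ℂ) * v ⟨k + 2, hk⟩ := by
  have key : ∀ j : Fin N, hcor N a b p ⟨k + 1, by omega⟩ j =
      (if j = ⟨k, by omega⟩ then (a k : ℂ) else 0)
      + (if j = ⟨k + 1, by omega⟩ then (b (k + 1) : ℂ) else 0)
      + (if j = ⟨k + 2, hk⟩ then (a (k + 1) : ℂ) else 0) := by
    intro j
    obtain ⟨j, hj⟩ := j
    simp only [hcor, Matrix.of_apply, Fin.ext_iff]
    split_ifs <;> first | omega | (simp; done) | grind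
  simp only [Matrix.mulVec, dotProduct, key, add_mul, Finset.sum_add_distrib, ite_mul, zero_mul,
    Finset.sum_ite_eq', Finset.sum_ite_eq, Finset.mem_univ, if_true]

theorem hcor_herm (N : ℕ) (hN : 3 ≤ N) (a b : ℕ → ℝ) (p : ℝ) : (hcor N a b p).IsHermitian := by
  ext i j
  obtain ⟨i, hi⟩ := i
  obtain ⟨j, hj⟩ := j
  simp only [hcor, Matrix.conjTranspose_apply, Matrix.of_apply]
  split_ifs <;> first | omega | (simp [← Complex.exp_conj]; done) | (simp; congr 2; done) | (simp; congr 2; omega)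

theorem hcor_real (N : ℕ) (hN : 3 ≤ N) (a b : ℕ → ℝ) (p : ℝ) (μ : ℂ) (v : Fin N → ℂ)
    (hv : v ≠ 0) (h : hcor N a b p *ᵥ v = μ • v) : μ.im = 0 := by
  have h1 := (hcor_herm N hN a b p).im_star_dotProduct_mulVec_self v
  rw [h, dotProduct_smul] at h1
  have h2 : star v ⬝ᵥ v = ((∑ i, Complex.normSq (v i) : ℝ) : ℂ) := by
    simp [dotProduct, Complex.normSq_eq_conj_mul_self]
  have h3 : (∑ i, Complex.normSq (v i)) ≠ 0 := by
    intro h0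
    apply hv
    rw [Finset.sum_eq_zero_iff_of_nonneg (fun _ _ => Complex.normSq_nonneg _)] at h0
    ext i
    simpa using h0 i (Finset.mem_univ i)
  rw [h2] at h1
  simpa [-Complex.ofReal_sum, h3] using h1

theorem hcor_vanish (N : ℕ) (hN : 3 ≤ N) (a b : ℕ → ℝ) (ha : ∀ k < N + 1, 0 < a k) (p : ℝ)
    (μ : ℂ) (v : Fin N → ℂ) (h : hcor N a b p *ᵥ v = μ • v)
    (h0 : v ⟨0, by omega⟩ = 0) (h1 : v ⟨1, by omega⟩ = 0) : v = 0 := by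
  have key : ∀ k, ∀ hk : k + 1 < N, v ⟨k, by omega⟩ = 0 ∧ v ⟨k + 1, hk⟩ = 0 := by
    intro k
    induction k with
    | zero => intro _; exact ⟨h0, h1⟩
    | succ k ih =>
      intro hk
      obtain ⟨e0, e1⟩ := ih (by omega)
      refine ⟨e1, ?_⟩
      have e := congrFun h ⟨k + 1, by omega⟩
      rw [hcor_row_mid N a b p v k hk] at e
      have := (ha (k + 1) (by omega)).ne'
      simpa [e0, e1, this] using e
  ext ⟨i, hi⟩
  by_cases hi' : i + 1 < N
  · exact (key i hi').1
  · obtain ⟨i, rfl⟩ : ∃ m, i = m + 1 := ⟨i - 1, by omega⟩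
    exact (key i hi).2

theorem hcor_zero_last (N : ℕ) (hN : 3 ≤ N) (a b : ℕ → ℝ) (ha : ∀ k < N + 1, 0 < a k) (p : ℝ)
    (μ : ℂ) (v : Fin N → ℂ) (h : hcor N a b p *ᵥ v = μ • v)
    (h0 : v ⟨0, by omega⟩ = 0) (h1 : v ⟨N - 1, by omega⟩ = 0) : v = 0 := by
  apply hcor_vanish N hN a b ha p μ v h h0
  have e := congrFun h ⟨0, by omega⟩
  rw [hcor_row_zero N hN] at e
  have := (ha 0 (by omega)).ne'
  simpa [h0, h1, this] using e

theorem hcor_parallel (N : ℕ) (hN : 3 ≤ N) (a b : ℕ → ℝ) (ha : ∀ k < N + 1, 0 < a k) (p : ℝ)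
    (μ : ℂ) (hμ : μ.im = 0) (v : Fin N → ℂ) (h : hcor N a b p *ᵥ v = μ • v)
    (h0 : v ⟨0, by omega⟩ = 0) (z : ℂ) (hz : (v ⟨1, by omega⟩ * z).im = 0) :
    (v ⟨N - 1, by omega⟩ * z).im = 0 := by
  have key : ∀ k, ∀ hk : k + 1 < N, (v ⟨k, by omega⟩ * z).im = 0 ∧ (v ⟨k + 1, hk⟩ * z).im = 0 := by
    intro k
    induction k with
    | zero => intro _; exact ⟨by simp [h0], hz⟩
    | succ k ih =>
      intro hk
      obtain ⟨e0, e1⟩ := ih (by omega)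
      refine ⟨e1, ?_⟩
      have e := congrFun h ⟨k + 1, by omega⟩
      rw [hcor_row_mid N a b p v k hk] at e
      have hne := (ha (k + 1) (by omega)).ne'
      have e' : (a (k + 1) : ℂ) * (v ⟨k + 2, hk⟩ * z) = (μ - (b (k + 1) : ℂ)) *
          (v ⟨k + 1, by omega⟩ * z) - (a k : ℂ) * (v ⟨k, by omega⟩ * z) := by
        simp only [Pi.smul_apply, smul_eq_mul] at e
        linear_combination z * e
      have e2 := congrArg Complex.im e'
      rw [Complex.im_ofReal_mul, Complex.sub_im, Complex.im_ofReal_mul, Complex.mul_im (μ - _),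
        e0, e1] at e2
      simpa [hμ, hne] using e2
  have := (key (N - 2) (by omega)).2
  convert this using 4
  simp only [Fin.mk.injEq]
  omega

theorem hcor_mem_ker (N : ℕ) (a b : ℕ → ℝ) (p : ℝ) (μ : ℂ) (v : Fin N → ℂ) :
    v ∈ LinearMap.ker (hcor N a b p - μ • (1 : Matrix (Fin N) (Fin N) ℂ)).mulVecLin ↔
      hcor N a b p *ᵥ v = μ • v := by
  simp [LinearMap.mem_ker, Matrix.sub_mulVec, Matrix.smul_mulVec, sub_eq_zero]

theorem hcor_le_two (N : ℕ) (hN : 3 ≤ N) (a b : ℕ → ℝ) (ha : ∀ k < N + 1, 0 < a k) (p : ℝ)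
    (μ : ℂ) : Module.finrank ℂ
        (LinearMap.ker (hcor N a b p - μ • (1 : Matrix (Fin N) (Fin N) ℂ)).mulVecLin) ≤ 2 := by
  set K := LinearMap.ker (hcor N a b p - μ • (1 : Matrix (Fin N) (Fin N) ℂ)).mulVecLin with hK
  let f : K →ₗ[ℂ] ℂ × ℂ :=
    ((LinearMap.proj (⟨0, by omega⟩ : Fin N)).prod
      (LinearMap.proj (⟨N - 1, by omega⟩ : Fin N))).comp K.subtype
  have hf : Function.Injective f := by
    rw [injective_iff_map_eq_zero]
    rintro ⟨v, hv⟩ h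
    rw [hK, hcor_mem_ker] at hv
    have h' := Prod.ext_iff.1 h
    exact Subtype.ext (hcor_zero_last N hN a b ha p μ v hv h'.1 h'.2)
  simpa using LinearMap.finrank_le_finrank_of_injective hf

theorem hcor_simple (N : ℕ) (hN : 3 ≤ N) (a b : ℕ → ℝ) (ha : ∀ k < N + 1, 0 < a k) (p : ℝ)
    (hc : ((a (N - 1) : ℂ) * Complex.exp ((p : ℂ) * Complex.I)
        + (a N : ℂ) * Complex.exp (-((p : ℂ) * Complex.I))).im = 0 →
        ((a (N - 1) : ℂ) * Complex.exp ((p : ℂ) * Complex.I)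
        + (a N : ℂ) * Complex.exp (-((p : ℂ) * Complex.I))) = 0)
    (μ : ℂ) (hv : ∃ v : Fin N → ℂ, v ≠ 0 ∧ hcor N a b p *ᵥ v = μ • v) : Module.finrank ℂ
        (LinearMap.ker (hcor N a b p - μ • (1 : Matrix (Fin N) (Fin N) ℂ)).mulVecLin) = 1 := by
  obtain ⟨v, hv0, hv⟩ := hv
  have hμ := hcor_real N hN a b p μ v hv0 hv
  set K := LinearMap.ker (hcor N a b p - μ • (1 : Matrix (Fin N) (Fin N) ℂ)).mulVecLin with hK
  let f : K →ₗ[ℂ] ℂ := (LinearMap.proj (⟨0, by omega⟩ : Fin N)).comp K.subtype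
  have hf : Function.Injective f := by
    rw [injective_iff_map_eq_zero]
    rintro ⟨u, hu⟩ h
    rw [hK, hcor_mem_ker] at hu
    apply Subtype.ext
    change u = 0
    have h0 : u ⟨0, by omega⟩ = 0 := h
    have e := congrFun hu ⟨0, by omega⟩
    rw [hcor_row_zero N hN] at e
    set c := ((a (N - 1) : ℂ) * Complex.exp ((p : ℂ) * Complex.I)
        + (a N : ℂ) * Complex.exp (-((p : ℂ) * Complex.I))) with hcdef
    have hne := (ha 0 (by omega)).ne'
    simp only [Pi.smul_apply, smul_eq_mul, h0, mul_zero, zero_add] at e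
    have hr := hcor_parallel N hN a b ha p μ hμ u hu h0
      ((starRingEnd ℂ) (u ⟨1, by omega⟩)) (by simp [Complex.mul_conj])
    set s := u ⟨N - 1, by omega⟩ with hs
    set t := u ⟨1, by omega⟩ with ht
    have e3 : c.im * Complex.normSq s = 0 := by
      have x : c * (Complex.normSq s : ℂ) = - ((a 0 : ℂ) * (t * (starRingEnd ℂ) s)) := by
        rw [← Complex.mul_conj]
        linear_combination (starRingEnd ℂ) s * e
      have y := congrArg Complex.im x
      rw [Complex.im_mul_ofReal, Complex.neg_im, Complex.im_ofReal_mul] at y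
      have w : (t * (starRingEnd ℂ) s).im = - (s * (starRingEnd ℂ) t).im := by
        simp [Complex.mul_im]; ring
      rw [y, w, hr]; simp
    rcases mul_eq_zero.1 e3 with h4 | h4
    · have h5 := hc h4
      apply hcor_vanish N hN a b ha p μ u hu h0
      simpa [h5, hne] using e
    · exact hcor_zero_last N hN a b ha p μ u hu h0 (Complex.normSq_eq_zero.1 h4)
  have h1 : Module.finrank ℂ K ≤ 1 := by
    simpa using LinearMap.finrank_le_finrank_of_injective hf
  have h2 : 0 < Module.finrank ℂ K := by
    have : Nontrivial K := ⟨⟨⟨v, (hcor_mem_ker N a b p μ v).2 hv⟩, 0, fun h => hv0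
      (congrArg Subtype.val h)⟩⟩
    exact Module.finrank_pos
  omega

theorem hcor_corner (x y p : ℝ) : (x : ℂ) * Complex.exp ((p : ℂ) * Complex.I)
        + (y : ℂ) * Complex.exp (-((p : ℂ) * Complex.I)) =
      ((x + y) * Real.cos p : ℝ) + ((x - y) * Real.sin p : ℝ) * Complex.I := by
  rw [← neg_mul, Complex.exp_mul_I, Complex.exp_mul_I, Complex.cos_neg, Complex.sin_neg]
  push_cast
  ring

/-- (i) Every eigenvalue of `h(π/2)` is simple; (ii) every
eigenspace of `h(p)` has dimension at most `2`; (iii) if `a_N ≠ a_{N+1}`, then for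
`p ∈ (0, π)` every eigenvalue of `h(p)` is simple. -/
theorem hcor_eigenspaces (N : ℕ) (hN : 3 ≤ N) (a b : ℕ → ℝ)
    (ha : ∀ k < N + 1, 0 < a k) :
    (∀ μ : ℂ,
      (∃ v : Fin N → ℂ, v ≠ 0 ∧ (hcor N a b (Real.pi / 2)) *ᵥ v = μ • v) →
      Module.finrank ℂ
        (LinearMap.ker
          (hcor N a b (Real.pi / 2) - μ • (1 : Matrix (Fin N) (Fin N) ℂ)).mulVecLin)
        = 1) ∧
    (∀ (p : ℝ) (μ : ℂ),
      (∃ v : Fin N → ℂ, v ≠ 0 ∧ (hcor N a b p) *ᵥ v = μ • v) →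
      Module.finrank ℂ
        (LinearMap.ker (hcor N a b p - μ • (1 : Matrix (Fin N) (Fin N) ℂ)).mulVecLin)
        ≤ 2) ∧
    (a (N - 1) ≠ a N →
      ∀ p ∈ Set.Ioo (0 : ℝ) Real.pi, ∀ μ : ℂ,
        (∃ v : Fin N → ℂ, v ≠ 0 ∧ (hcor N a b p) *ᵥ v = μ • v) →
        Module.finrank ℂ
          (LinearMap.ker (hcor N a b p - μ • (1 : Matrix (Fin N) (Fin N) ℂ)).mulVecLin)
          = 1) := by
  refine ⟨fun μ hv => hcor_simple N hN a b ha _ ?_ μ hv,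
    fun p μ _ => hcor_le_two N hN a b ha p μ,
    fun hne p hp μ hv => hcor_simple N hN a b ha p ?_ μ hv⟩
  · rw [hcor_corner]
    intro h
    rw [Complex.add_im, Complex.ofReal_im, Complex.im_ofReal_mul] at h
    simp only [Real.sin_pi_div_two, Real.cos_pi_div_two, Complex.I_im, mul_one, mul_zero,
      zero_add] at h ⊢
    simp [h]
  · rw [hcor_corner]
    intro h
    rw [Complex.add_im, Complex.ofReal_im, Complex.im_ofReal_mul] at h
    have := (Real.sin_pos_of_pos_of_lt_pi hp.1 hp.2).ne'
    simp [sub_eq_zero, hne, this] at h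
end

section
/- Let N ≥ 3, let a₁, …, a_N > 0 and b₁, …, b_N ∈ ℝ, let h(p) be the periodic N×N Hermitian matrix with corner phases, let a = (−1)^{N−1} a₁a₂⋯a_N and let Δ(x) = det(B − xI) − a_N²·det(Ḃ − xI). Suppose λ : ℝ → ℝ is differentiable and satisfies det(h(p) − λ(p)·I) = 0 for all p ∈ ℝ. Then for every p₀ ∈ ℝ with Δ'(λ(p₀)) ≠ 0, one has λ'(p₀) = 2a·sin(p₀) / Δ'(λ(p₀)). -/
open Matrix Complex

/-- The real symmetric tridiagonal `N×N` matrix with diagonal `b 0, …, b (N-1)`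
and off-diagonal entries `a 0, …, a (N-2)`. -/
noncomputable def triR (N : ℕ) (a b : ℕ → ℝ) : Matrix (Fin N) (Fin N) ℝ :=
  Matrix.of fun i j =>
    if (i : ℕ) = (j : ℕ) then b i
    else if (i : ℕ) + 1 = (j : ℕ) then a i
    else if (j : ℕ) + 1 = (i : ℕ) then a j
    else 0

/-- `Ḃ`: the `(N-2)×(N-2)` matrix obtained from `triR N a b` by removing the first
and last rows and columns. -/
noncomputable def triRsub (N : ℕ) (a b : ℕ → ℝ) :
    Matrix (Fin (N - 2)) (Fin (N - 2)) ℝ :=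
  (triR N a b).submatrix
    (fun i => ⟨i.val + 1, by have := i.isLt; omega⟩)
    (fun j => ⟨j.val + 1, by have := j.isLt; omega⟩)

/-- `Δ(x) = det(B - xI) - a_N² det(Ḃ - xI)`. -/
noncomputable def DeltaFun (N : ℕ) (a b : ℕ → ℝ) : ℝ → ℝ :=
  fun x =>
    (triR N a b - x • (1 : Matrix (Fin N) (Fin N) ℝ)).det
      - (a (N - 1)) ^ 2
        * (triRsub N a b - x • (1 : Matrix (Fin (N - 2)) (Fin (N - 2)) ℝ)).det

theorem aux_det_corner {R : Type*} [CommRing R] (n : ℕ)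
    (T : Matrix (Fin (n+2)) (Fin (n+2)) R) (u v : R) :
    (T + Matrix.single 0 (Fin.last (n+1)) u + Matrix.single (Fin.last (n+1)) 0 v).det
      = T.det + u * ((-1) ^ (n+1) * (T.submatrix Fin.succ Fin.castSucc).det)
        + v * ((-1) ^ (n+1) * (T.submatrix Fin.castSucc Fin.succ).det)
        - u * v * (T.submatrix (fun i : Fin n => i.castSucc.succ)
            (fun i : Fin n => i.castSucc.succ)).det := by
  have h0l : (0 : Fin (n+2)) ≠ Fin.last (n+1) := by
    simp [Fin.ext_iff]
  have hM : T + Matrix.single 0 (Fin.last (n+1)) u + Matrix.single (Fin.last (n+1)) 0 v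
      = updateRow (updateRow T 0 (T 0 + u • Pi.single (Fin.last (n+1)) 1)) (Fin.last (n+1))
        (T (Fin.last (n+1)) + v • Pi.single 0 1) := by
    ext i j
    by_cases hi : i = Fin.last (n+1)
    · subst hi
      simp [Matrix.single_apply, Pi.single_apply, h0l, eq_comm]
    · by_cases hi0 : i = 0
      · subst hi0
        simp [Matrix.single_apply, Pi.single_apply, h0l, h0l.symm, Matrix.updateRow_ne, eq_comm]
      · simp [Matrix.single_apply, Matrix.updateRow_ne, hi, hi0, Ne.symm hi, Ne.symm hi0]
  have e1 : ∀ A : Matrix (Fin (n+2)) (Fin (n+2)) R,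
      (updateRow A 0 (Pi.single (Fin.last (n+1)) 1)).det
        = (-1) ^ (n+1) * (A.submatrix Fin.succ Fin.castSucc).det := by
    intro A
    rw [← adjugate_apply, adjugate_fin_succ_eq_det_submatrix]
    simp [Fin.succAbove_last]
  have e2 : ∀ m (A : Matrix (Fin (m+1)) (Fin (m+1)) R),
      (updateRow A (Fin.last m) (Pi.single 0 1)).det
        = (-1) ^ m * (A.submatrix Fin.castSucc Fin.succ).det := by
    intro m A
    rw [← adjugate_apply, adjugate_fin_succ_eq_det_submatrix]
    simp [Fin.succAbove_last]
  have s1 : updateRow (updateRow T 0 (T 0 + u • Pi.single (Fin.last (n+1)) 1)) (Fin.last (n+1))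
      (T (Fin.last (n+1))) = updateRow T 0 (T 0 + u • Pi.single (Fin.last (n+1)) 1) := by
    ext i j
    by_cases hi : i = Fin.last (n+1)
    · subst hi
      simp [Matrix.updateRow_ne, h0l.symm]
    · simp [Matrix.updateRow_ne, hi]
  have s2 : ∀ r r', updateRow (updateRow T 0 r) (Fin.last (n+1)) r' =
      updateRow (updateRow T (Fin.last (n+1)) r') 0 r := by
    intro r r'
    ext i j
    by_cases hi : i = Fin.last (n+1)
    · subst hi
      simp [Matrix.updateRow_ne, h0l.symm]
    · by_cases hi0 : i = 0
      · subst hi0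
        simp [Matrix.updateRow_ne, h0l]
      · simp [Matrix.updateRow_ne, hi, hi0]
  have s3 : ∀ r, updateRow (updateRow T (Fin.last (n+1)) r) 0 (T 0)
      = updateRow T (Fin.last (n+1)) r := by
    intro r
    rw [← s2]
    simp
  have s4 : (updateRow T (Fin.last (n+1)) (Pi.single 0 1)).submatrix Fin.succ Fin.castSucc
      = updateRow (T.submatrix Fin.succ Fin.castSucc) (Fin.last n) (Pi.single 0 1) := by
    ext i j
    by_cases hi : i = Fin.last n
    · subst hi
      simp [Pi.single_apply]
    · have : i.succ ≠ Fin.last (n+1) := by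
        rw [← Fin.succ_last]; exact fun h => hi (Fin.succ_injective _ h)
      simp [Matrix.updateRow_ne, hi, this]
  have hs : ((-1 : R)) ^ (n+1) * (-1) ^ n = -1 := by
    rw [← pow_add]; exact Odd.neg_one_pow ⟨n, by ring⟩
  rw [hM, det_updateRow_add, s1, det_updateRow_smul, det_updateRow_add, updateRow_eq_self,
    det_updateRow_smul, e1, s2, det_updateRow_add, det_updateRow_smul, s3, e2, e1, s4, e2]
  rw [Matrix.submatrix_submatrix]
  have : (Fin.succ ∘ Fin.castSucc : Fin n → Fin (n+2)) = fun i => i.castSucc.succ := rfl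
  have h2 : (Fin.castSucc ∘ Fin.succ : Fin n → Fin (n+2)) = fun i => i.castSucc.succ := by
    funext i; simp
  rw [this, h2]
  linear_combination (u * v * (T.submatrix (fun i : Fin n => i.castSucc.succ)
            (fun i : Fin n => i.castSucc.succ)).det) * hs

theorem aux_char (n : ℕ) (a b : ℕ → ℝ) (p x : ℝ) :
    (hper (n+3) a b p - (x : ℂ) • (1 : Matrix (Fin (n+3)) (Fin (n+3)) ℂ)).det
      = ((DeltaFun (n+3) a b x + 2 * ((-1 : ℝ) ^ (n+2) * ∏ k ∈ Finset.range (n+3), a k)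
          * Real.cos p : ℝ) : ℂ) := by
  set S := triR (n+3) a b - x • (1 : Matrix (Fin (n+3)) (Fin (n+3)) ℝ) with hS
  have hM : hper (n+3) a b p - (x : ℂ) • (1 : Matrix (Fin (n+3)) (Fin (n+3)) ℂ)
      = S.map Complex.ofRealHom
        + Matrix.single 0 (Fin.last (n+2)) ((a (n+2) : ℂ) * Complex.exp ((p : ℂ) * Complex.I))
        + Matrix.single (Fin.last (n+2)) 0
          ((a (n+2) : ℂ) * Complex.exp (-((p : ℂ) * Complex.I))) := by
    ext i j
    obtain ⟨i, hi⟩ := i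
    obtain ⟨j, hj⟩ := j
    simp only [hS, hper, triR, Matrix.sub_apply, Matrix.add_apply, Matrix.smul_apply,
      Matrix.of_apply, Matrix.map_apply, Matrix.single_apply, Matrix.one_apply, Fin.ext_iff,
      Fin.val_zero, Fin.val_last, Complex.ofRealHom_eq_coe, smul_eq_mul, Complex.ofReal_sub,
      Complex.ofReal_mul, show n + 3 - 1 = n + 2 from rfl]
    split_ifs <;> first | omega | simp
  have d1 : (S.submatrix Fin.succ Fin.castSucc).det = ∏ k ∈ Finset.range (n+2), a k := by
    rw [Matrix.det_of_isUpperTriangular, Finset.prod_range]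
    · refine Finset.prod_congr rfl fun i _ => ?_
      simp [hS, triR, Fin.ext_iff]
      intro h; omega
    · intro i j hij
      have hij' : (j : ℕ) < i := hij
      simp only [hS, triR, Matrix.submatrix_apply, Matrix.sub_apply, Matrix.smul_apply,
        Matrix.of_apply, Matrix.one_apply, Fin.ext_iff, Fin.val_succ, Fin.val_castSucc]
      split_ifs <;> first | omega | simp
  have hsym : Sᵀ = S := by
    ext i j
    simp only [hS, triR, Matrix.transpose_apply, Matrix.sub_apply, Matrix.smul_apply,
        Matrix.of_apply, Matrix.one_apply, Fin.ext_iff]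
    split_ifs <;> first | omega | simp_all
  have d2 : (S.submatrix Fin.castSucc Fin.succ).det = ∏ k ∈ Finset.range (n+2), a k := by
    rw [← d1, ← Matrix.det_transpose, Matrix.transpose_submatrix, hsym]
  have d3 : (S.submatrix (fun i : Fin (n+1) => i.castSucc.succ)
        (fun i : Fin (n+1) => i.castSucc.succ)).det
      = (triRsub (n+3) a b - x • (1 : Matrix (Fin (n+3-2)) (Fin (n+3-2)) ℝ)).det := by
    show _ = @Matrix.det (Fin (n+1)) _ _ ℝ _ _
    congr 1
    ext i j
    have h1 : (1 : Matrix (Fin (n+3)) (Fin (n+3)) ℝ) i.castSucc.succ j.castSucc.succ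
        = (1 : Matrix (Fin (n+1)) (Fin (n+1)) ℝ) i j := by
      simp [Matrix.one_apply, Fin.ext_iff]
    show triR (n+3) a b i.castSucc.succ j.castSucc.succ - x • _ = _ - x • _
    rw [h1]
    rfl
  have hm : ∀ m (A : Matrix (Fin m) (Fin m) ℝ), (A.map Complex.ofRealHom).det = (A.det : ℂ) := by
    intro m A
    exact (RingHom.map_det Complex.ofRealHom A).symm
  rw [hM, aux_det_corner, Matrix.submatrix_map, Matrix.submatrix_map, Matrix.submatrix_map,
    hm, hm, hm, hm, d1, d2, d3]
  have hc : Complex.exp ((p : ℂ) * Complex.I) + Complex.exp (-((p : ℂ) * Complex.I))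
      = 2 * Complex.cos p := by
    rw [Complex.cos]; ring_nf
  have hc2 : Complex.exp ((p : ℂ) * Complex.I) * Complex.exp (-((p : ℂ) * Complex.I)) = 1 := by
    rw [← Complex.exp_add]; simp
  have hD : DeltaFun (n+3) a b x = S.det - (a (n+2))^2 *
     (triRsub (n+3) a b - x • (1 : Matrix (Fin (n+3-2)) (Fin (n+3-2)) ℝ)).det := rfl
  rw [hD, Finset.prod_range_succ a (n+2)]
  push_cast
  generalize (((triRsub (n+3) a b - x • (1 : Matrix (Fin (n+3-2)) (Fin (n+3-2)) ℝ)).det : ℝ) : ℂ) = D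
  linear_combination ((a (n+2) : ℂ) * (-1) ^ (n+2) * ∏ k ∈ Finset.range (n+2), (a k : ℂ)) * hc
    - (a (n+2) : ℂ)^2 * D * hc2

/-- If `λ : ℝ → ℝ` is differentiable with
`det(h(p) - λ(p)I) = 0` for all `p`, then at every `p₀` with `Δ'(λ(p₀)) ≠ 0` one
has `λ'(p₀) = 2a sin(p₀)/Δ'(λ(p₀))`, where `a = (-1)^{N-1} a₁⋯a_N`. -/
theorem hper_branch_deriv (N : ℕ) (hN : 3 ≤ N) (a b : ℕ → ℝ)
    (ha : ∀ k < N, 0 < a k)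
    (lam : ℝ → ℝ) (hlam : Differentiable ℝ lam)
    (hdet : ∀ p : ℝ,
      (hper N a b p - (lam p : ℂ) • (1 : Matrix (Fin N) (Fin N) ℂ)).det = 0) :
    ∀ p₀ : ℝ, deriv (DeltaFun N a b) (lam p₀) ≠ 0 →
      deriv lam p₀
        = 2 * ((-1 : ℝ) ^ (N - 1) * ∏ k ∈ Finset.range N, a k) * Real.sin p₀
            / deriv (DeltaFun N a b) (lam p₀) := by
  obtain ⟨n, rfl⟩ : ∃ n, N = n + 3 := ⟨N - 3, by omega⟩
  intro p₀ hd
  set c : ℝ := (-1 : ℝ) ^ (n + 3 - 1) * ∏ k ∈ Finset.range (n+3), a k with hc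
  have key : ∀ p, DeltaFun (n+3) a b (lam p) + 2 * c * Real.cos p = 0 := by
    intro p
    have h := hdet p
    rw [aux_char] at h
    exact Complex.ofReal_eq_zero.mp h
  have h1 : HasDerivAt (fun p => DeltaFun (n+3) a b (lam p) + 2 * c * Real.cos p)
      (deriv (DeltaFun (n+3) a b) (lam p₀) * deriv lam p₀ + 2 * c * (-Real.sin p₀)) p₀ :=
    ((differentiableAt_of_deriv_ne_zero hd).hasDerivAt.comp p₀ (hlam p₀).hasDerivAt).add
      ((Real.hasDerivAt_cos p₀).const_mul (2 * c))
  have h2 : HasDerivAt (fun p => DeltaFun (n+3) a b (lam p) + 2 * c * Real.cos p) 0 p₀ := by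
    have : (fun p => DeltaFun (n+3) a b (lam p) + 2 * c * Real.cos p) = fun _ => (0:ℝ) :=
      funext key
    rw [this]; exact hasDerivAt_const _ _
  have h3 := h1.unique h2
  rw [eq_div_iff hd]
  linear_combination h3
end

section
/- Let a, b, c, d > 0 be real numbers and for p ∈ ℝ let h(p) be the 2×2 Hermitian matrix [[2a cos p, d + c e^{ip}], [d + c e^{−ip}, 2b cos p]]. Then: (i) for every p ∈ ℝ, the eigenvalues of h(p) are λ±(p) = (a+b)cos p ± √((a−b)²cos²p + (d−c)² + 4dc·cos²(p/2)); (ii) for p ∈ [−π, π], h(p) has a repeated eigenvalue (λ₊(p) = λ₋(p)) if and only if |p| = π, a = b and c = d. -/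
open Matrix Complex

/-- The 2×2 Hermitian symbol `h(p) = [[2a cos p, d + c e^{ip}], [d + c e^{-ip}, 2b cos p]]`. -/
noncomputable def h2 (a b c d : ℝ) (p : ℝ) : Matrix (Fin 2) (Fin 2) ℂ :=
  !![((2 * a * Real.cos p : ℝ) : ℂ), (d : ℂ) + (c : ℂ) * Complex.exp ((p : ℂ) * Complex.I);
     (d : ℂ) + (c : ℂ) * Complex.exp (-((p : ℂ) * Complex.I)), ((2 * b * Real.cos p : ℝ) : ℂ)]

/-- `λ₊(p)`. -/
noncomputable def lamP (a b c d : ℝ) (p : ℝ) : ℝ :=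
  (a + b) * Real.cos p
    + Real.sqrt ((a - b) ^ 2 * (Real.cos p) ^ 2 + (d - c) ^ 2
        + 4 * d * c * (Real.cos (p / 2)) ^ 2)

/-- `λ₋(p)`. -/
noncomputable def lamM (a b c d : ℝ) (p : ℝ) : ℝ :=
  (a + b) * Real.cos p
    - Real.sqrt ((a - b) ^ 2 * (Real.cos p) ^ 2 + (d - c) ^ 2
        + 4 * d * c * (Real.cos (p / 2)) ^ 2)

/-- (i) The eigenvalues of `h(p)` are exactly
`λ±(p) = (a+b)cos p ± √((a−b)²cos²p + (d−c)² + 4dc cos²(p/2))`;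
(ii) for `p ∈ [−π, π]`, `h(p)` has a repeated eigenvalue iff `|p| = π`, `a = b`
and `c = d`. -/
theorem h2_eigenvalues (a b c d : ℝ)
    (ha : 0 < a) (hb : 0 < b) (hc : 0 < c) (hd : 0 < d) :
    (∀ (p : ℝ) (x : ℂ),
      (h2 a b c d p - x • (1 : Matrix (Fin 2) (Fin 2) ℂ)).det = 0 ↔
        (x = ((lamP a b c d p : ℝ) : ℂ) ∨ x = ((lamM a b c d p : ℝ) : ℂ))) ∧
    (∀ p ∈ Set.Icc (-Real.pi) Real.pi,
      (lamP a b c d p = lamM a b c d p ↔ (|p| = Real.pi ∧ a = b ∧ c = d))) := by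
  have hD : ∀ p : ℝ, 0 ≤ (a - b) ^ 2 * (Real.cos p) ^ 2 + (d - c) ^ 2
        + 4 * d * c * (Real.cos (p / 2)) ^ 2 := fun p => by positivity
  constructor
  · intro p x
    have hs := Real.sq_sqrt (hD p)
    unfold lamP lamM
    set s := Real.sqrt ((a - b) ^ 2 * (Real.cos p) ^ 2 + (d - c) ^ 2
        + 4 * d * c * (Real.cos (p / 2)) ^ 2) with hsdef
    have hh : Real.cos p = 2 * Real.cos (p / 2) ^ 2 - 1 := by
      rw [← Real.cos_two_mul]; congr 1; ring
    have hs2 : s ^ 2 = (a - b) ^ 2 * (Real.cos p) ^ 2 + d ^ 2 + c ^ 2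
        + 2 * d * c * Real.cos p := by
      rw [hs]; linear_combination (-2 * d * c) * hh
    have hs3 : (s : ℂ) ^ 2 = ((a : ℂ) - b) ^ 2 * (Real.cos p : ℂ) ^ 2 + d ^ 2 + c ^ 2
        + 2 * d * c * (Real.cos p : ℂ) := by exact_mod_cast hs2
    have he : Complex.exp ((p : ℂ) * Complex.I) * Complex.exp (-((p : ℂ) * Complex.I)) = 1 := by
      rw [← Complex.exp_add]; simp
    have hc2 : Complex.exp ((p : ℂ) * Complex.I) + Complex.exp (-((p : ℂ) * Complex.I))
        = 2 * (Real.cos p : ℂ) := by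
      rw [Complex.ofReal_cos, Complex.two_cos, neg_mul]
    have key : (h2 a b c d p - x • (1 : Matrix (Fin 2) (Fin 2) ℂ)).det
        = (x - (((a + b) * Real.cos p + s : ℝ) : ℂ))
          * (x - (((a + b) * Real.cos p - s : ℝ) : ℂ)) := by
      rw [Matrix.det_fin_two]
      simp only [h2, Matrix.sub_apply, Matrix.smul_apply, Matrix.one_apply, Matrix.of_apply,
        Matrix.cons_val', Matrix.cons_val_zero, Matrix.cons_val_one, Matrix.cons_val_fin_one,
        smul_eq_mul, if_true, Fin.isValue, zero_ne_one, one_ne_zero, if_false, mul_zero, mul_one,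
        sub_zero, Complex.ofReal_mul, Complex.ofReal_add, Complex.ofReal_sub, Complex.ofReal_ofNat]
      linear_combination hs3 - (c : ℂ) ^ 2 * he - (d : ℂ) * c * hc2
    rw [key, mul_eq_zero, sub_eq_zero, sub_eq_zero]
  · intro p hp
    have h0 : lamP a b c d p = lamM a b c d p ↔ (a - b) ^ 2 * (Real.cos p) ^ 2 + (d - c) ^ 2
        + 4 * d * c * (Real.cos (p / 2)) ^ 2 = 0 := by
      rw [← Real.sqrt_eq_zero (hD p)]
      unfold lamP lamM
      constructor <;> intro h <;> linarith
    rw [h0]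
    constructor
    · intro h
      have h1 : 0 ≤ (a - b) ^ 2 * (Real.cos p) ^ 2 := by positivity
      have h2 : 0 ≤ (d - c) ^ 2 := by positivity
      have h3 : 0 ≤ 4 * d * c * (Real.cos (p / 2)) ^ 2 := by positivity
      have h3' : 4 * d * c * (Real.cos (p / 2)) ^ 2 = 0 := by linarith
      have hcos : Real.cos (p / 2) = 0 := by
        have : 4 * d * c ≠ 0 := by positivity
        simpa [this] using h3'
      have hcp : Real.cos p = -1 := by
        have : Real.cos p = 2 * Real.cos (p / 2) ^ 2 - 1 := by
          rw [← Real.cos_two_mul]; congr 1; ring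
        rw [this, hcos]; norm_num
      have hdc : (d - c) ^ 2 = 0 := by linarith
      have hab : (a - b) ^ 2 = 0 := by
        have : (a - b) ^ 2 * (Real.cos p) ^ 2 = 0 := by linarith
        rw [hcp] at this; linarith
      refine ⟨?_, by linarith [pow_eq_zero_iff (two_ne_zero) |>.1 hab],
        by linarith [pow_eq_zero_iff (two_ne_zero) |>.1 hdc]⟩
      by_contra hne
      have hlt : |p| < Real.pi := lt_of_le_of_ne (abs_le.2 hp) hne
      have := abs_lt.1 hlt
      have := Real.cos_pos_of_mem_Ioo (x := p / 2) ⟨by linarith, by linarith⟩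
      linarith
    · rintro ⟨h, rfl, rfl⟩
      have : Real.cos (p / 2) = 0 := by
        rw [← Real.cos_abs, abs_div, h, abs_two, Real.cos_pi_div_two]
      rw [this]; ring
end
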